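/- Let α ∈ (0,1) and u_± = (1±α)/2. Then lim_{ℓ→∞} e^{αℓ}[G_ℓ(ū_ℓ, φ̄_ℓ) − G(ū, φ̄)] = 8α/(1−α²). -/

import Mathlib

/-!
Write `a = α / 2`, `A = A_ℓ`, `J = 1/4 - A²`, `J₀ = 1/4 - a²`, and use the centred density
`v = u - 1/2`. Along a profile `v = A tanh (A x)` one has `v' = A² - v²` and
`φ' = v' / (1/4 - v²)`, and the entropy integrand collapses to
`g = φ' log v' + (1 - φ') log J`. Taking `v ∈ (-a, a)` as the integration variable (`gg_profile`,
`integral_gg_profile`) turns both energies, the infinite-volume one being the case `A = a`, into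
integrals of explicit densities `dens` over the *same* interval `(-a, a)`.

Put `D = A² - a² = J₀ - J` and `δ = A - a`. Up to an error of at most `D² / J₀²` times
`1 / (A² - v²)`, the difference of the densities is
`(log (A² - v²) - log (a² - v²) - D / (A² - v²)) / J₀` (`dens_diff_bound`). Since
`∫ 1 / (A² - v²) = 2ℓ` over `(-a, a)`, the total error is `O(δ² ℓ)`; the leading part integrates in
closed form (`energy_diff_bound`), and the `δ log δ` terms cancel, leaving `2 δ / J₀ + o(δ)`.

Finally `2ℓ A = log ((A + a) / δ)` gives `δ e^{2aℓ} → 2a` and `δ ℓ → 0`, so the limit is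
`4 a / J₀ = 8 α / (1 - α²)` (`tendsto_of_bound`). That `A → a` at all follows from
`2ℓ ≤ 2a / D`.
-/

open MeasureTheory Real Filter Topology Set
open scoped Classical

noncomputable section

/-- Bernoulli entropy `s(p) = p log p + (1-p) log (1-p)` (with `0 log 0 = 0`). -/
def S (p : ℝ) : ℝ := p * Real.log p + (1 - p) * Real.log (1 - p)

/-- The integrand `g(u,φ,p) = s(u) + s(p) + (1-u)φ - log(1+e^φ)`. -/
def gg (u φ p : ℝ) : ℝ := S u + S p + (1 - u) * φ - Real.log (1 + Real.exp φ)

/-- The chemical potential `s'(v) = log (v/(1-v))`. -/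
def phiOf (v : ℝ) : ℝ := Real.log (v / (1 - v))

/-- The step function `θ_{a₋,a₊}`. -/
def theta (am ap x : ℝ) : ℝ := if x < 0 then am else ap

/-- Translation by `z`: `(τ_z f)(x) = f(x-z)`. -/
def tau (z : ℝ) (f : ℝ → ℝ) : ℝ → ℝ := fun x => f (x - z)

/-- Membership in `L^∞(ℝ;[0,1])`. -/
def MemU (u : ℝ → ℝ) : Prop := Measurable u ∧ ∀ x, u x ∈ Icc (0:ℝ) 1

/-- Membership in `L^∞(ℝ₊;[0,1])`. -/
def MemUplus (u : ℝ → ℝ) : Prop := Measurable u ∧ ∀ x, 0 ≤ x → u x ∈ Icc (0:ℝ) 1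

/-- The class `C`: absolutely continuous with `0 ≤ φ' ≤ 1` a.e. (equivalently nondecreasing
and 1-Lipschitz) with limits `pm` at `-∞` and `pp` at `+∞`. -/
def MemC (pm pp : ℝ) (φ : ℝ → ℝ) : Prop :=
  (∀ x y : ℝ, x ≤ y → φ x ≤ φ y ∧ φ y - φ x ≤ y - x) ∧
  Tendsto φ atBot (𝓝 pm) ∧ Tendsto φ atTop (𝓝 pp)

/-- The class `C⁺` on the half line. -/
def MemCplus (pm pp : ℝ) (φ : ℝ → ℝ) : Prop :=
  (∀ x y : ℝ, 0 ≤ x → x ≤ y → φ x ≤ φ y ∧ φ y - φ x ≤ y - x) ∧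
  φ 0 = pm ∧ Tendsto φ atTop (𝓝 pp)

/-- Membership in `X = L^∞(ℝ;[0,1]) × C`. -/
def MemX (um up : ℝ) (u φ : ℝ → ℝ) : Prop := MemU u ∧ MemC (phiOf um) (phiOf up) φ

/-- Membership in `X⁺ = L^∞(ℝ₊;[0,1]) × C⁺`. -/
def MemXplus (um up : ℝ) (u φ : ℝ → ℝ) : Prop :=
  MemUplus u ∧ MemCplus (phiOf um) (phiOf up) φ

/-- The finite volume functional `G_ℓ` on the symmetric interval `(-ℓ,ℓ)`. -/
def Gl (um up l : ℝ) (u φ : ℝ → ℝ) : EReal :=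
  if (∀ x ≤ -l, u x = um ∧ φ x = phiOf um) ∧ (∀ x, l ≤ x → u x = up ∧ φ x = phiOf up) then
    (↑(∫ x in Ioo (-l) l, (gg (u x) (φ x) (deriv φ x) - gg up (phiOf up) 0)) : EReal)
  else ⊤

/-- The finite volume functional `G_ℓ⁺` on `(0,ℓ)`. -/
def Glplus (um up l : ℝ) (u φ : ℝ → ℝ) : EReal :=
  if (∀ x, l ≤ x → u x = up ∧ φ x = phiOf up) then
    (↑(∫ x in Ioo (0:ℝ) l, (gg (u x) (φ x) (deriv φ x) - gg up (phiOf up) 0)) : EReal)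
  else ⊤

/-- The infinite volume functional `G` on the whole line, `+∞` off its domain `D`. -/
def GE (um up : ℝ) (u φ : ℝ → ℝ) : EReal :=
  if Integrable (fun x => (u x - theta um up x)^2) volume ∧
      Integrable (fun x => φ x - theta (phiOf um) (phiOf up) x) volume then
    (↑(∫ x, (gg (u x) (φ x) (deriv φ x) - gg up (phiOf up) 0)) : EReal)
  else ⊤

/-- The infinite volume functional `G⁺` on the half line, `+∞` off its domain `D⁺`. -/
def GEplus (um up : ℝ) (u φ : ℝ → ℝ) : EReal :=
  if IntegrableOn (fun x => (u x - up)^2) (Ioi 0) volume ∧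
      IntegrableOn (fun x => φ x - phiOf up) (Ioi 0) volume then
    (↑(∫ x in Ioi (0:ℝ), (gg (u x) (φ x) (deriv φ x) - gg up (phiOf up) 0)) : EReal)
  else ⊤

/-- Convergence of sequences in `X`: weak* in `L^∞(ℝ;[0,1])` and uniform for `φ`. -/
def ConvX (un φn : ℕ → ℝ → ℝ) (u φ : ℝ → ℝ) : Prop :=
  (∀ f : ℝ → ℝ, Integrable f volume →
    Tendsto (fun n => ∫ x, un n x * f x) atTop (𝓝 (∫ x, u x * f x))) ∧
  TendstoUniformly φn φ atTop

/-- Convergence of families indexed by `ℓ → ∞` in `X`. -/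
def ConvXFam (U Φ : ℝ → ℝ → ℝ) (u φ : ℝ → ℝ) : Prop :=
  (∀ f : ℝ → ℝ, Integrable f volume →
    Tendsto (fun l => ∫ x, U l x * f x) atTop (𝓝 (∫ x, u x * f x))) ∧
  TendstoUniformly Φ φ atTop

/-- Convergence of sequences in `X⁺`. -/
def ConvXplus (un φn : ℕ → ℝ → ℝ) (u φ : ℝ → ℝ) : Prop :=
  (∀ f : ℝ → ℝ, IntegrableOn f (Ioi 0) volume →
    Tendsto (fun n => ∫ x in Ioi (0:ℝ), un n x * f x) atTop
      (𝓝 (∫ x in Ioi (0:ℝ), u x * f x))) ∧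
  TendstoUniformlyOn φn φ atTop (Ici 0)

/-- Convergence of families indexed by `ℓ → ∞` in `X⁺`. -/
def ConvXplusFam (U Φ : ℝ → ℝ → ℝ) (u φ : ℝ → ℝ) : Prop :=
  (∀ f : ℝ → ℝ, IntegrableOn f (Ioi 0) volume →
    Tendsto (fun l => ∫ x in Ioi (0:ℝ), U l x * f x) atTop
      (𝓝 (∫ x in Ioi (0:ℝ), u x * f x))) ∧
  TendstoUniformlyOn Φ φ atTop (Ici 0)

/-- The standing wave `ū(x) = 1/2 + (u₊ - 1/2) tanh((u₊ - 1/2) x)`. -/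
def ubarStanding (up : ℝ) (x : ℝ) : ℝ :=
  1/2 + (up - 1/2) * Real.tanh ((up - 1/2) * x)


/-- The finite volume minimizer `ū_ℓ(x) = 1/2 + A_ℓ tanh(A_ℓ x)` with `A_ℓ = (1/4 - J_ℓ)^½`. -/
def ubl (Jval x : ℝ) : ℝ :=
  1/2 + Real.sqrt (1/4 - Jval) * Real.tanh (Real.sqrt (1/4 - Jval) * x)

/-! ### The profiles `A tanh (A x)` -/

lemma hasDerivAt_profile (A x : ℝ) :
    HasDerivAt (fun y => A * Real.tanh (A * y)) (A ^ 2 - (A * Real.tanh (A * x)) ^ 2) x := by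
  have hc : Real.cosh (A * x) ≠ 0 := (Real.cosh_pos _).ne'
  have h1 : HasDerivAt (fun y : ℝ => A * y) A x := by simpa using (hasDerivAt_id x).const_mul A
  have h2 := ((h1.sinh.div h1.cosh hc).const_mul A)
  have he : (fun y => A * Real.tanh (A * y))
      = fun y => A * ((fun y => Real.sinh (A * y)) / fun y => Real.cosh (A * y)) y := by
    funext y; simp [Real.tanh_eq_sinh_div_cosh]
  rw [he]
  convert! h2 using 1
  rw [Real.tanh_eq_sinh_div_cosh]
  field_simp

lemma profile_mem (A : ℝ) (hA : 0 < A) (x : ℝ) : A * Real.tanh (A * x) ∈ Ioo (-A) A := by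
  have h := Real.tanh_bijOn.mapsTo (mem_univ (A * x))
  constructor <;> nlinarith [h.1, h.2]

lemma profile_strictMono (A : ℝ) (hA : 0 < A) : StrictMono (fun y => A * Real.tanh (A * y)) := by
  apply strictMono_of_deriv_pos
  intro x
  rw [(hasDerivAt_profile A x).deriv]
  have h := profile_mem A hA x
  nlinarith [h.1, h.2]

lemma image_profile_univ (A : ℝ) (hA : 0 < A) :
    (fun y => A * Real.tanh (A * y)) '' univ = Ioo (-A) A := by
  ext v
  constructor
  · rintro ⟨x, -, rfl⟩
    exact profile_mem A hA x
  · intro hv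
    refine ⟨Real.artanh (v / A) / A, mem_univ _, ?_⟩
    have h : v / A ∈ Ioo (-1 : ℝ) 1 := by
      constructor
      · rw [lt_div_iff₀ hA]; linarith [hv.1]
      · rw [div_lt_iff₀ hA]; linarith [hv.2]
    simp only
    rw [mul_div_cancel₀ _ hA.ne', Real.tanh_artanh h, mul_div_cancel₀ _ hA.ne']

/-- The profile reaches the boundary values `± a` exactly at `± l` when `l` is the half-length
prescribed by `A` and `a`. -/
lemma image_profile_Ioo (A a l : ℝ) (ha : 0 < a) (hA : a < A)
    (hl : A * (2 * l) = Real.log (A + a) - Real.log (A - a)) :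
    (fun y => A * Real.tanh (A * y)) '' Ioo (-l) l = Ioo (-a) a := by
  have hA0 : 0 < A := ha.trans hA
  have hval : A * Real.tanh (A * l) = a := by
    have h1 : Real.exp (2 * (A * l)) = (A + a) / (A - a) := by
      rw [← Real.exp_log (show 0 < (A + a) / (A - a) from div_pos (by linarith) (by linarith)),
        Real.log_div (by linarith) (by linarith), ← hl]
      congr 1; ring
    have h2 : Real.exp (2 * (A * l)) = Real.exp (A * l) * Real.exp (A * l) := by
      rw [← Real.exp_add]; congr 1; ring
    have h3 := Real.exp_pos (A * l)
    rw [h2, eq_div_iff (by linarith)] at h1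
    rw [Real.tanh_eq, Real.exp_neg]
    field_simp
    nlinarith
  have hneg : A * Real.tanh (A * (-l)) = -a := by
    rw [mul_neg, Real.tanh_neg, mul_neg, hval]
  have hm := profile_strictMono A hA0
  ext v
  constructor
  · rintro ⟨x, hx, rfl⟩
    exact ⟨by simpa only [hneg] using hm hx.1, by simpa only [hval] using hm hx.2⟩
  · intro hv
    have : v ∈ (fun y => A * Real.tanh (A * y)) '' univ := by
      rw [image_profile_univ A hA0]; exact ⟨by linarith [hv.1], by linarith [hv.2]⟩
    obtain ⟨x, -, rfl⟩ := this
    refine ⟨x, ⟨hm.lt_iff_lt.1 ?_, hm.lt_iff_lt.1 ?_⟩, rfl⟩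
    · simpa only [hneg] using hv.1
    · simpa only [hval] using hv.2

/-! ### The energy in the variable `v = u - 1/2` -/

lemma gg_phiOf (u p : ℝ) (h0 : 0 < u) (h1 : u < 1) :
    gg u (phiOf u) p = Real.log (u * (1 - u)) + S p := by
  have h2 : 0 < 1 - u := by linarith
  have h3 : 1 + u / (1 - u) = (1 - u)⁻¹ := by field_simp; ring
  rw [gg, phiOf, Real.exp_log (div_pos h0 h2), h3, Real.log_inv, Real.log_div h0.ne' h2.ne',
    Real.log_mul h0.ne' h2.ne', S]
  ring

/-- The energy density of the profile of amplitude `A`, with respect to the variable `v = u - 1/2`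
and relative to the energy of the constant state `1/2 + a`; here `1/4 - A ^ 2` is the current `J`. -/
def dens (A a v : ℝ) : ℝ :=
  (Real.log (A ^ 2 - v ^ 2) - Real.log (1 / 4 - A ^ 2)) / (1 / 4 - v ^ 2)
    + (Real.log (1 / 4 - A ^ 2) - Real.log (1 / 4 - a ^ 2)) / (A ^ 2 - v ^ 2)

lemma gg_profile (A a x : ℝ) (hA : 0 < A) (hA2 : A < 1 / 2) (ha : 0 < a) (ha2 : a < 1 / 2) :
    gg (1 / 2 + A * Real.tanh (A * x)) (phiOf (1 / 2 + A * Real.tanh (A * x)))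
        (deriv (fun y => phiOf (1 / 2 + A * Real.tanh (A * y))) x)
      - gg (1 / 2 + a) (phiOf (1 / 2 + a)) 0
    = (A ^ 2 - (A * Real.tanh (A * x)) ^ 2) * dens A a (A * Real.tanh (A * x)) := by
  have hv := profile_mem A hA x
  have hd := hasDerivAt_profile A x
  have hderiv : deriv (fun y => phiOf (1 / 2 + A * Real.tanh (A * y))) x
      = (A ^ 2 - (A * Real.tanh (A * x)) ^ 2) / (1 / 4 - (A * Real.tanh (A * x)) ^ 2) := by
    apply HasDerivAt.deriv
    unfold phiOf
    have h1 : HasDerivAt (fun y => 1 / 2 + A * Real.tanh (A * y)) _ x := hd.const_add (1 / 2)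
    have h2 : HasDerivAt (fun y => 1 - (1 / 2 + A * Real.tanh (A * y))) _ x := h1.const_sub 1
    have e1 : (1 / 2 + A * Real.tanh (A * x)) ≠ 0 := by linarith [hv.1]
    have e2 : 1 - (1 / 2 + A * Real.tanh (A * x)) ≠ 0 := by linarith [hv.2]
    have h3 := (h1.div h2 e2).log (div_ne_zero e1 e2)
    convert! h3 using 1
    simp only [Pi.div_apply]
    generalize A * Real.tanh (A * x) = v at *
    have e3 : 1 / 4 - v ^ 2 = (1 / 2 + v) * (1 - (1 / 2 + v)) := by ring
    rw [e3]
    generalize 1 / 2 + v = u at *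
    field_simp
    ring
  rw [hderiv, gg_phiOf _ _ (by linarith [hv.1]) (by linarith [hv.2]),
    gg_phiOf _ _ (by linarith) (by linarith)]
  generalize A * Real.tanh (A * x) = v at *
  have p1 : 0 < A ^ 2 - v ^ 2 := by nlinarith [hv.1, hv.2]
  have p2 : 0 < 1 / 4 - A ^ 2 := by nlinarith
  have p3 : 0 < 1 / 4 - v ^ 2 := by linarith
  have q1 : (1 / 2 + v) * (1 - (1 / 2 + v)) = 1 / 4 - v ^ 2 := by ring
  have q2 : (1 / 2 + a) * (1 - (1 / 2 + a)) = 1 / 4 - a ^ 2 := by ring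
  have q3 : 1 - (A ^ 2 - v ^ 2) / (1 / 4 - v ^ 2) = (1 / 4 - A ^ 2) / (1 / 4 - v ^ 2) := by
    rw [one_sub_div p3.ne']; congr 1; ring
  rw [q1, q2, S, S, q3, Real.log_div p1.ne' p3.ne', Real.log_div p2.ne' p3.ne', dens]
  simp only [Real.log_zero, sub_zero, Real.log_one]
  generalize Real.log (A ^ 2 - v ^ 2) = X
  generalize Real.log (1 / 4 - A ^ 2) = Y
  generalize Real.log (1 / 4 - v ^ 2) = Z
  generalize Real.log (1 / 4 - a ^ 2) = W
  have q4 : 1 / 4 - A ^ 2 = (1 / 4 - v ^ 2) - (A ^ 2 - v ^ 2) := by ring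
  rw [q4]
  generalize 1 / 4 - v ^ 2 = w at *
  generalize A ^ 2 - v ^ 2 = m at *
  field_simp
  ring

/-- Change of variables `v = A tanh (A x)` in the energy. Both sides may a priori be
non-integrable; the equality holds in any case. -/
lemma integral_gg_profile (A a : ℝ) (hA : 0 < A) (hA2 : A < 1 / 2) (ha : 0 < a) (ha2 : a < 1 / 2)
    (s : Set ℝ) (hs : MeasurableSet s) :
    ∫ x in s, (gg (1 / 2 + A * Real.tanh (A * x)) (phiOf (1 / 2 + A * Real.tanh (A * x)))
        (deriv (fun y => phiOf (1 / 2 + A * Real.tanh (A * y))) x)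
      - gg (1 / 2 + a) (phiOf (1 / 2 + a)) 0)
    = ∫ v in (fun y => A * Real.tanh (A * y)) '' s, dens A a v := by
  rw [integral_image_eq_integral_abs_deriv_smul hs
    (fun x _ => (hasDerivAt_profile A x).hasDerivWithinAt) (profile_strictMono A hA).injective.injOn]
  refine setIntegral_congr_fun hs fun x _ => ?_
  have hv := profile_mem A hA x
  rw [gg_profile A a x hA hA2 ha ha2, smul_eq_mul, abs_of_pos]
  nlinarith [hv.1, hv.2]

/-! ### Explicit integrals over `(-a, a)` -/

lemma integrableOn_log_add (A a : ℝ) (ha : 0 < a) :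
    IntegrableOn (fun v : ℝ => Real.log (A + v)) (Ioo (-a) a) := by
  rw [← intervalIntegrable_iff_integrableOn_Ioo_of_le (by linarith)]
  have h := (intervalIntegral.intervalIntegrable_log' (a := A + -a) (b := A + a)).comp_add_left A
  simpa using h

lemma integrableOn_log_sub (A a : ℝ) (ha : 0 < a) :
    IntegrableOn (fun v : ℝ => Real.log (A - v)) (Ioo (-a) a) := by
  rw [← intervalIntegrable_iff_integrableOn_Ioo_of_le (by linarith)]
  have h := (intervalIntegral.intervalIntegrable_log' (a := A - -a) (b := A - a)).comp_sub_left A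
  simpa using h

lemma log_sq_sub (A a v : ℝ) (hA : a ≤ A) (hv : v ∈ Ioo (-a) a) :
    Real.log (A ^ 2 - v ^ 2) = Real.log (A + v) + Real.log (A - v) := by
  rw [← Real.log_mul (by linarith [hv.1]) (by linarith [hv.2])]
  congr 1; ring

lemma integrableOn_log_sq_sub (A a : ℝ) (ha : 0 < a) (hA : a ≤ A) :
    IntegrableOn (fun v : ℝ => Real.log (A ^ 2 - v ^ 2)) (Ioo (-a) a) :=
  ((integrableOn_log_add A a ha).add (integrableOn_log_sub A a ha)).congr_fun
    (fun v hv => (log_sq_sub A a v hA hv).symm) measurableSet_Ioo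

lemma integral_log_sq_sub (A a : ℝ) (ha : 0 < a) (hA : a ≤ A) :
    ∫ v in Ioo (-a) a, Real.log (A ^ 2 - v ^ 2)
      = 2 * ((A + a) * Real.log (A + a) - (A - a) * Real.log (A - a) - 2 * a) := by
  rw [setIntegral_congr_fun measurableSet_Ioo (fun v hv => log_sq_sub A a v hA hv),
    integral_add (integrableOn_log_add A a ha) (integrableOn_log_sub A a ha),
    ← integral_Ioc_eq_integral_Ioo, ← integral_Ioc_eq_integral_Ioo,
    ← intervalIntegral.integral_of_le (by linarith),
    ← intervalIntegral.integral_of_le (by linarith),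
    intervalIntegral.integral_comp_add_left (fun x => Real.log x),
    intervalIntegral.integral_comp_sub_left (fun x => Real.log x), integral_log, integral_log]
  simp only [sub_neg_eq_add, ← sub_eq_add_neg]
  ring

lemma continuousOn_inv_sq_sub (A a : ℝ) (ha : 0 < a) (hA : a < A) :
    ContinuousOn (fun v : ℝ => (A ^ 2 - v ^ 2)⁻¹) (Icc (-a) a) := by
  refine ContinuousOn.inv₀ (by fun_prop) fun v hv => ?_
  nlinarith [hv.1, hv.2]

lemma integrableOn_inv_sq_sub (A a : ℝ) (ha : 0 < a) (hA : a < A) :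
    IntegrableOn (fun v : ℝ => (A ^ 2 - v ^ 2)⁻¹) (Ioo (-a) a) :=
  ((continuousOn_inv_sq_sub A a ha hA).integrableOn_Icc).mono_set Ioo_subset_Icc_self

lemma integral_inv_sq_sub (A a : ℝ) (ha : 0 < a) (hA : a < A) :
    A * ∫ v in Ioo (-a) a, (A ^ 2 - v ^ 2)⁻¹ = Real.log (A + a) - Real.log (A - a) := by
  have hA0 : 0 < A := ha.trans hA
  rw [← integral_Ioc_eq_integral_Ioo, ← intervalIntegral.integral_of_le (by linarith),
    intervalIntegral.integral_eq_sub_of_hasDerivAt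
      (f := fun v => (Real.log (A + v) - Real.log (A - v)) / (2 * A))]
  · simp only [sub_neg_eq_add, ← sub_eq_add_neg]
    field_simp
    ring
  · intro v hv
    rw [uIcc_of_le (by linarith)] at hv
    have e1 : A + v ≠ 0 := by linarith [hv.1]
    have e2 : A - v ≠ 0 := by linarith [hv.2]
    have h1 : HasDerivAt (fun v => Real.log (A + v)) _ v :=
      ((hasDerivAt_id v).const_add A).log e1
    have h2 : HasDerivAt (fun v => Real.log (A - v)) _ v :=
      ((hasDerivAt_id v).const_sub A).log e2
    convert! (h1.sub h2).div_const (2 * A) using 1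
    have e3 : A ^ 2 - v ^ 2 ≠ 0 := by
      rw [show A ^ 2 - v ^ 2 = (A + v) * (A - v) by ring]; exact mul_ne_zero e1 e2
    simp only [id]
    field_simp
    ring
  · apply ContinuousOn.intervalIntegrable
    rw [uIcc_of_le (by linarith)]
    exact continuousOn_inv_sq_sub A a ha hA

lemma integrableOn_dens (A a : ℝ) (ha : 0 < a) (hA : a ≤ A) (hA2 : A < 1 / 2) :
    IntegrableOn (dens A a) (Ioo (-a) a) := by
  have hw : ContinuousOn (fun v : ℝ => (1 / 4 - v ^ 2)⁻¹) (Icc (-a) a) := by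
    have := continuousOn_inv_sq_sub (1 / 2) a ha (by linarith)
    norm_num at this ⊢; exact this
  have h1 : IntegrableOn (fun v : ℝ =>
      (Real.log (A ^ 2 - v ^ 2) - Real.log (1 / 4 - A ^ 2)) * (1 / 4 - v ^ 2)⁻¹) (Icc (-a) a) := by
    refine IntegrableOn.mul_continuousOn ?_ hw isCompact_Icc
    rw [integrableOn_Icc_iff_integrableOn_Ioo]
    exact (integrableOn_log_sq_sub A a ha hA).sub (by simp [integrableOn_const_iff])
  have h1' := h1.mono_set (Ioo_subset_Icc_self)
  have h2 : IntegrableOn (fun v : ℝ => (Real.log (1 / 4 - A ^ 2) - Real.log (1 / 4 - a ^ 2))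
      * (A ^ 2 - v ^ 2)⁻¹) (Ioo (-a) a) := by
    rcases hA.eq_or_lt with h | h
    · subst h; simp
    · exact (integrableOn_inv_sq_sub A a ha h).const_mul _
  exact h1'.add h2

/-! ### Comparison of the energies -/

/-- Pointwise comparison of the difference of the two densities with an explicitly integrable
function. Freezing the weight `1 / (1/4 - v ^ 2)` at `v = ± a`, where the difference concentrates,
and linearizing `log (J / J₀)` costs only `D ^ 2 / (A ^ 2 - v ^ 2)`, with `D = A ^ 2 - a ^ 2`. -/
lemma dens_diff_bound (A a v : ℝ) (ha : 0 < a) (hA : a < A) (hA2 : A < 1 / 2)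
    (hv : v ∈ Ioo (-a) a) :
    |dens A a v - dens a a v - (1 / 4 - a ^ 2)⁻¹ * (Real.log (A ^ 2 - v ^ 2)
        - Real.log (a ^ 2 - v ^ 2) - (A ^ 2 - a ^ 2) * (A ^ 2 - v ^ 2)⁻¹)|
      ≤ (A ^ 2 - a ^ 2) ^ 2 / (1 / 4 - a ^ 2) ^ 2 * (A ^ 2 - v ^ 2)⁻¹ := by
  have hm : 0 < a ^ 2 - v ^ 2 := by nlinarith [hv.1, hv.2]
  have hD : 0 < A ^ 2 - a ^ 2 := by nlinarith
  have hJ : 0 < 1 / 4 - A ^ 2 := by nlinarith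
  obtain ⟨m, hm'⟩ : ∃ m, m = a ^ 2 - v ^ 2 := ⟨_, rfl⟩
  obtain ⟨D, hD'⟩ : ∃ D, D = A ^ 2 - a ^ 2 := ⟨_, rfl⟩
  obtain ⟨J, hJ'⟩ : ∃ J, J = 1 / 4 - A ^ 2 := ⟨_, rfl⟩
  have e1 : A ^ 2 - v ^ 2 = m + D := by linarith
  have e2 : 1 / 4 - a ^ 2 = J + D := by linarith
  have e3 : 1 / 4 - v ^ 2 = J + D + m := by linarith
  rw [dens, dens, e1, e2, e3, ← hm', ← hD', ← hJ']
  rw [← hm'] at hm; rw [← hD'] at hD; rw [← hJ'] at hJ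
  clear hm' hD' hJ' e1 e2 e3
  -- `log (1 + D / m)` and `log (J / J₀)`, with the elementary bounds `1 - 1/t ≤ log t ≤ t - 1`
  obtain ⟨X, hX⟩ : ∃ X, X = Real.log (m + D) - Real.log m := ⟨_, rfl⟩
  obtain ⟨Y, hY⟩ : ∃ Y, Y = Real.log J - Real.log (J + D) := ⟨_, rfl⟩
  have hX' : X = Real.log ((m + D) / m) := by rw [Real.log_div (by linarith) hm.ne', hX]
  have hY' : Y = Real.log (J / (J + D)) := by rw [Real.log_div hJ.ne' (by linarith), hY]
  have X1 : X ≤ D / m := by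
    rw [hX']; refine (Real.log_le_sub_one_of_pos (by positivity)).trans (le_of_eq ?_)
    field_simp; ring
  have X2 : D / (m + D) ≤ X := by
    rw [hX']; refine le_trans (le_of_eq ?_) (Real.one_sub_inv_le_log_of_pos (by positivity))
    field_simp; ring
  have Y1 : Y ≤ - (D / (J + D)) := by
    rw [hY']; refine (Real.log_le_sub_one_of_pos (by positivity)).trans (le_of_eq ?_)
    field_simp; ring
  have Y2 : - (D / J) ≤ Y := by
    rw [hY']; refine le_trans (le_of_eq ?_) (Real.one_sub_inv_le_log_of_pos (by positivity))
    field_simp; ring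
  have key : (Real.log (m + D) - Real.log J) / (J + D + m)
        + (Real.log J - Real.log (J + D)) / (m + D)
      - ((Real.log m - Real.log (J + D)) / (J + D + m)
        + (Real.log (J + D) - Real.log (J + D)) / m)
      - (J + D)⁻¹ * (Real.log (m + D) - Real.log m - D * (m + D)⁻¹)
      = - (m / ((J + D + m) * (J + D)) * (X - D / (m + D)))
        + (J * Y + D) / ((J + D + m) * (m + D)) := by
    rw [hX, hY]
    field_simp
    ring
  rw [key]
  have b1 : 0 ≤ m / ((J + D + m) * (J + D)) * (X - D / (m + D)) :=
    mul_nonneg (by positivity) (by linarith)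
  have b2 : m / ((J + D + m) * (J + D)) * (X - D / (m + D))
      ≤ D ^ 2 / (J + D) ^ 2 * (m + D)⁻¹ := by
    have : m / ((J + D + m) * (J + D)) * (X - D / (m + D))
        ≤ m / ((J + D) * (J + D)) * (D / m - D / (m + D)) := by
      have hh : J + D ≤ J + D + m := by linarith
      refine mul_le_mul (div_le_div_of_nonneg_left hm.le (by positivity)
        (mul_le_mul_of_nonneg_right hh (by positivity))) (by linarith) (by linarith)
        (by positivity)
    refine this.trans (le_of_eq ?_)
    field_simp
    ring
  have c1 : 0 ≤ (J * Y + D) / ((J + D + m) * (m + D)) := by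
    have : -D ≤ J * Y := by
      calc -D = J * (-(D / J)) := by field_simp
        _ ≤ _ := by gcongr
    exact div_nonneg (by linarith) (by positivity)
  have c2 : (J * Y + D) / ((J + D + m) * (m + D)) ≤ D ^ 2 / (J + D) ^ 2 * (m + D)⁻¹ := by
    have h : J * Y + D ≤ D ^ 2 / (J + D) := by
      have : J * Y ≤ J * (-(D / (J + D))) := by gcongr
      refine (add_le_add_left this D).trans (le_of_eq ?_)
      field_simp; ring
    calc (J * Y + D) / ((J + D + m) * (m + D))
        ≤ (D ^ 2 / (J + D)) / ((J + D) * (m + D)) := by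
          have hh : J + D ≤ J + D + m := by linarith
          exact div_le_div₀ (by positivity) h (by positivity)
            (mul_le_mul_of_nonneg_right hh (by positivity))
      _ = _ := by field_simp
  rw [abs_le]
  constructor <;> linarith

/-- The energy difference, up to an error `O(D ^ 2 L)`, where `L` is the length of the interval. -/
lemma energy_diff_bound (A a L : ℝ) (ha : 0 < a) (hA : a < A) (hA2 : A < 1 / 2)
    (hL : ∫ v in Ioo (-a) a, (A ^ 2 - v ^ 2)⁻¹ = L) :
    |(∫ v in Ioo (-a) a, dens A a v) - (∫ v in Ioo (-a) a, dens a a v)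
        - (1 / 4 - a ^ 2)⁻¹ * (2 * ((A + a) * Real.log (A + a) - (A - a) * Real.log (A - a)
            - 2 * a * Real.log (2 * a)) - (A ^ 2 - a ^ 2) * L)|
      ≤ (A ^ 2 - a ^ 2) ^ 2 / (1 / 4 - a ^ 2) ^ 2 * L := by
  have i1 := integrableOn_dens A a ha hA.le hA2
  have i2 := integrableOn_dens a a ha le_rfl (hA.trans hA2)
  have i3 := integrableOn_log_sq_sub A a ha hA.le
  have i4 := integrableOn_log_sq_sub a a ha le_rfl
  have i5 := integrableOn_inv_sq_sub A a ha hA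
  have i6 := (i5.const_mul (A ^ 2 - a ^ 2))
  have i7 : IntegrableOn (fun v : ℝ => Real.log (A ^ 2 - v ^ 2) - Real.log (a ^ 2 - v ^ 2))
      (Ioo (-a) a) := i3.sub i4
  have i8 : IntegrableOn (fun v : ℝ => (1 / 4 - a ^ 2)⁻¹ * (Real.log (A ^ 2 - v ^ 2)
      - Real.log (a ^ 2 - v ^ 2) - (A ^ 2 - a ^ 2) * (A ^ 2 - v ^ 2)⁻¹)) (Ioo (-a) a) :=
    (i7.sub i6).const_mul _
  have i9 : IntegrableOn (fun v : ℝ => dens A a v - dens a a v) (Ioo (-a) a) := i1.sub i2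
  have hM : ∫ v in Ioo (-a) a, (Real.log (A ^ 2 - v ^ 2)
        - Real.log (a ^ 2 - v ^ 2) - (A ^ 2 - a ^ 2) * (A ^ 2 - v ^ 2)⁻¹)
      = 2 * ((A + a) * Real.log (A + a) - (A - a) * Real.log (A - a)
            - 2 * a * Real.log (2 * a)) - (A ^ 2 - a ^ 2) * L := by
    rw [integral_sub i7 i6, integral_sub i3 i4, integral_const_mul, hL,
      integral_log_sq_sub A a ha hA.le, integral_log_sq_sub a a ha le_rfl, sub_self, zero_mul,
      ← two_mul]
    ring
  rw [← hM, ← integral_const_mul, ← hL, ← integral_const_mul, ← integral_sub i1 i2,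
    ← integral_sub i9 i8, ← Real.norm_eq_abs]
  refine norm_integral_le_of_norm_le (i5.const_mul _) ?_
  refine (ae_restrict_iff' measurableSet_Ioo).2 (Eventually.of_forall fun v hv => ?_)
  exact dens_diff_bound A a v ha hA hA2 hv

/-! ### Asymptotics as the amplitude tends to `a` -/

/-- Asymptotics for an energy difference `K` approximated as in `energy_diff_bound`, when the
amplitude `A` decreases to `a` and `L` is the corresponding length. With `δ = A - a`, the two
factors `exp (a L) * δ` and `K / δ` converge separately, to `2 a` and `2 / (1/4 - a ^ 2)`. -/
lemma tendsto_of_bound {a : ℝ} (ha : 0 < a) (ha2 : a < 1 / 2) (A L K : ℝ → ℝ)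
    (hlim : Tendsto A atTop (𝓝 a))
    (hA : ∀ᶠ l in atTop, a < A l)
    (hL : ∀ᶠ l in atTop, A l * L l = Real.log (A l + a) - Real.log (A l - a))
    (hK : ∀ᶠ l in atTop, |K l - (1 / 4 - a ^ 2)⁻¹ * (2 * ((A l + a) * Real.log (A l + a)
          - (A l - a) * Real.log (A l - a)
            - 2 * a * Real.log (2 * a)) - (A l ^ 2 - a ^ 2) * L l)|
      ≤ (A l ^ 2 - a ^ 2) ^ 2 / (1 / 4 - a ^ 2) ^ 2 * L l) :
    Tendsto (fun l => Real.exp (a * L l) * K l) atTop (𝓝 (4 * a / (1 / 4 - a ^ 2))) := by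
  have hJ : 0 < 1 / 4 - a ^ 2 := by nlinarith
  have hδ : Tendsto (fun l => A l - a) atTop (𝓝 0) := by
    simpa using hlim.sub_const a
  have hs : Tendsto (fun l => A l + a) atTop (𝓝 (2 * a)) := by
    rw [two_mul]; exact hlim.add_const a
  have hslog : Tendsto (fun l => Real.log (A l + a)) atTop (𝓝 (Real.log (2 * a))) :=
    (Real.continuousAt_log (by positivity)).tendsto.comp hs
  have hδL : Tendsto (fun l => (A l - a) * L l) atTop (𝓝 0) := by
    have h0 : Tendsto (fun l => ((A l - a) * Real.log (A l + a)
        - (A l - a) * Real.log (A l - a)) / A l) atTop (𝓝 ((0 * Real.log (2 * a) - 0) / a)) := by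
      refine ((hδ.mul hslog).sub ?_).div hlim ha.ne'
      have := (Real.continuous_mul_log.tendsto 0).comp hδ
      simpa [Function.comp_def] using this
    rw [zero_mul, sub_zero, zero_div] at h0
    refine h0.congr' ?_
    filter_upwards [hL, hA] with l h1 h2
    have : A l ≠ 0 := by linarith
    rw [div_eq_iff this, ← mul_sub, ← h1]; ring
  have hE : Tendsto (fun l => Real.exp (a * L l) * (A l - a)) atTop (𝓝 (2 * a)) := by
    have h0 : Tendsto (fun l => (A l + a) * Real.exp (-((A l - a) * L l))) atTop
        (𝓝 (2 * a * Real.exp (-0))) :=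
      hs.mul ((Real.continuous_exp.tendsto _).comp hδL.neg)
    rw [neg_zero, Real.exp_zero, mul_one] at h0
    refine h0.congr' ?_
    filter_upwards [hL, hA] with l h1 h2
    have h3 : a * L l = (Real.log (A l + a) - Real.log (A l - a)) + -((A l - a) * L l) := by
      rw [← h1]; ring
    have h4 : 0 < A l - a := by linarith
    rw [h3, Real.exp_add, Real.exp_sub, Real.exp_log (by linarith), Real.exp_log h4]
    field_simp
  -- difference quotient of `t ↦ t * log t` at `2 * a`
  have hslope : Tendsto (fun l => ((A l + a) * Real.log (A l + a) - 2 * a * Real.log (2 * a))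
      / (A l - a)) atTop (𝓝 (Real.log (2 * a) + 1)) := by
    have h1 := (hasDerivAt_iff_tendsto_slope.1
      (Real.hasDerivAt_mul_log (show (2 * a) ≠ 0 by positivity)))
    have h2 : Tendsto (fun l => A l + a) atTop (𝓝[≠] (2 * a)) := by
      refine tendsto_nhdsWithin_iff.2 ⟨hs, ?_⟩
      filter_upwards [hA] with l h
      simp only [mem_compl_iff, mem_singleton_iff]
      intro h'; linarith
    refine (h1.comp h2).congr fun l => ?_
    simp only [Function.comp, slope_def_field]
    congr 1; ring
  have hKδ : Tendsto (fun l => K l / (A l - a)) atTop (𝓝 ((1 / 4 - a ^ 2)⁻¹ * 2)) := by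
    have hmain : Tendsto (fun l => (1 / 4 - a ^ 2)⁻¹ *
        (2 * (((A l + a) * Real.log (A l + a) - 2 * a * Real.log (2 * a))
      / (A l - a)) - 2 * Real.log (A l + a) + (A l - a) * L l)) atTop
        (𝓝 ((1 / 4 - a ^ 2)⁻¹ * (2 * (Real.log (2 * a) + 1) - 2 * Real.log (2 * a) + 0))) :=
      (((hslope.const_mul 2).sub (hslog.const_mul 2)).add hδL).const_mul _
    have herr : Tendsto (fun l => (A l + a) ^ 2 / (1 / 4 - a ^ 2) ^ 2 * ((A l - a) * L l)) atTop
        (𝓝 ((2 * a) ^ 2 / (1 / 4 - a ^ 2) ^ 2 * 0)) :=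
      ((hs.pow 2).div_const _).mul hδL
    rw [mul_zero] at herr
    have hdiff := squeeze_zero_norm' (f := fun l => K l / (A l - a) - (1 / 4 - a ^ 2)⁻¹ *
        (2 * (((A l + a) * Real.log (A l + a) - 2 * a * Real.log (2 * a))
      / (A l - a)) - 2 * Real.log (A l + a) + (A l - a) * L l)) ?_ herr
    · have := hdiff.add hmain
      convert this using 2
      · ring
      · ring
    · filter_upwards [hL, hA, hK] with l h1 h2 h3
      have h4 : 0 < A l - a := by linarith
      have h5 : K l / (A l - a) - (1 / 4 - a ^ 2)⁻¹ *
          (2 * (((A l + a) * Real.log (A l + a) - 2 * a * Real.log (2 * a))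
            / (A l - a)) - 2 * Real.log (A l + a) + (A l - a) * L l)
          = (K l - (1 / 4 - a ^ 2)⁻¹ * (2 * ((A l + a) * Real.log (A l + a)
          - (A l - a) * Real.log (A l - a)
            - 2 * a * Real.log (2 * a)) - (A l ^ 2 - a ^ 2) * L l)) / (A l - a) := by
        have h6 : Real.log (A l - a) = Real.log (A l + a) - A l * L l := by linarith
        rw [h6]
        generalize (1 / 4 - a ^ 2)⁻¹ = c
        field_simp
        ring
      rw [h5, Real.norm_eq_abs, abs_div, abs_of_pos h4, div_le_iff₀ h4]
      refine h3.trans (le_of_eq ?_)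
      ring
  have := hE.mul hKδ
  refine (this.congr' ?_).trans (le_of_eq ?_)
  · filter_upwards [hA] with l h
    have h4 : A l - a ≠ 0 := by linarith
    field_simp
  · congr 1
    field_simp
    ring

/-- Let `α ∈ (0,1)`, `u_± = (1±α)/2`. Then
`lim_{ℓ→∞} e^{αℓ} [G_ℓ(ū_ℓ,φ̄_ℓ) - G(ū,φ̄)] = 8α/(1-α²)`. -/
theorem stmt_16 (α : ℝ) (hα : α ∈ Ioo (0:ℝ) 1) (Jl : ℝ → ℝ)
    (hJl : ∀ l, 0 < l → Jl l < (1 - α^2)/4 ∧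
      (∫ r in ((1-α)/2)..((1+α)/2), (r * (1 - r) - Jl l)⁻¹) = 2 * l) :
    Tendsto (fun l => Real.exp (α * l) *
      ((∫ x in Ioo (-l) l,
          (gg (ubl (Jl l) x) (phiOf (ubl (Jl l) x))
              (deriv (fun y => phiOf (ubl (Jl l) y)) x)
            - gg ((1+α)/2) (phiOf ((1+α)/2)) 0))
        - ∫ x, (gg (ubarStanding ((1+α)/2) x) (phiOf (ubarStanding ((1+α)/2) x))
              (deriv (fun y => phiOf (ubarStanding ((1+α)/2) y)) x)
            - gg ((1+α)/2) (phiOf ((1+α)/2)) 0)))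
      atTop (𝓝 (8 * α / (1 - α^2))) := by
  obtain ⟨h0, h1⟩ := hα
  obtain ⟨a, rfl⟩ : ∃ a, α = 2 * a := ⟨α / 2, by ring⟩
  have ha : 0 < a := by linarith
  have ha2 : a < 1 / 2 := by linarith
  set A : ℝ → ℝ := fun l => Real.sqrt (1 / 4 - Jl l) with hAdef
  have hAsq : ∀ l, 0 < l → A l ^ 2 = 1 / 4 - Jl l := fun l hl =>
    Real.sq_sqrt (by nlinarith [(hJl l hl).1, sq_nonneg a])
  have haA : ∀ l, 0 < l → a < A l := fun l hl =>
    lt_of_pow_lt_pow_left₀ 2 (Real.sqrt_nonneg _) (by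
      rw [hAsq l hl]; linarith [(hJl l hl).1])
  have hint : ∀ l, 0 < l → ∫ v in Ioo (-a) a, (A l ^ 2 - v ^ 2)⁻¹ = 2 * l := fun l hl => by
    rw [← (hJl l hl).2, ← integral_Ioc_eq_integral_Ioo,
      ← intervalIntegral.integral_of_le (by linarith)]
    have h := intervalIntegral.integral_comp_add_right (a := -a) (b := a)
      (fun r : ℝ => (r * (1 - r) - Jl l)⁻¹) (1 / 2)
    rw [show (1 - 2 * a) / 2 = -a + 1 / 2 by ring, show (1 + 2 * a) / 2 = a + 1 / 2 by ring, ← h]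
    congr 1
    funext v
    rw [hAsq l hl]
    congr 1
    ring
  have hlen : ∀ l, 0 < l → A l * (2 * l) = Real.log (A l + a) - Real.log (A l - a) :=
    fun l hl => by rw [← hint l hl]; exact integral_inv_sq_sub _ _ ha (haA l hl)
  -- the integrand whose integral is `2 * l` is at most `1 / (A ^ 2 - a ^ 2)`, which forces `A → a`
  have hDle : ∀ l, 0 < l → A l ^ 2 ≤ a ^ 2 + a / l := fun l hl => by
    have hD : 0 < A l ^ 2 - a ^ 2 := by nlinarith [haA l hl]
    have h : ∫ v in Ioo (-a) a, (A l ^ 2 - v ^ 2)⁻¹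
        ≤ ∫ v in Ioo (-a) a, (A l ^ 2 - a ^ 2)⁻¹ := by
      refine setIntegral_mono_on (integrableOn_inv_sq_sub _ _ ha (haA l hl))
        (by simp [integrableOn_const_iff]) measurableSet_Ioo fun v hv => ?_
      have : v ^ 2 ≤ a ^ 2 := by nlinarith [hv.1, hv.2]
      gcongr
    rw [hint l hl, setIntegral_const, Measure.real, Real.volume_Ioo,
      ENNReal.toReal_ofReal (by linarith), smul_eq_mul, ← div_eq_mul_inv, le_div_iff₀ hD] at h
    have : A l ^ 2 - a ^ 2 ≤ a / l := by
      rw [le_div_iff₀ hl]; linarith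
    linarith
  have hlim : Tendsto A atTop (𝓝 a) := by
    have hup : Tendsto (fun l : ℝ => Real.sqrt (a ^ 2 + a / l)) atTop (𝓝 a) := by
      have : Tendsto (fun l : ℝ => a ^ 2 + a / l) atTop (𝓝 (a ^ 2 + 0)) :=
        (tendsto_const_nhds.div_atTop tendsto_id).const_add _
      have h := (Real.continuous_sqrt.tendsto _).comp this
      rwa [add_zero, Real.sqrt_sq ha.le] at h
    refine tendsto_of_tendsto_of_tendsto_of_le_of_le' tendsto_const_nhds hup ?_ ?_
    · filter_upwards [eventually_gt_atTop 0] with l hl using (haA l hl).le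
    · filter_upwards [eventually_gt_atTop 0] with l hl using Real.le_sqrt_of_sq_le (hDle l hl)
  have hhalf : ∀ᶠ l in atTop, A l < 1 / 2 := hlim.eventually_lt_const ha2
  have hpos := eventually_gt_atTop (0 : ℝ)
  have hmain := tendsto_of_bound ha ha2 A (fun l => 2 * l)
    (fun l => (∫ v in Ioo (-a) a, dens (A l) a v) - ∫ v in Ioo (-a) a, dens a a v) hlim
    (hpos.mono haA) (hpos.mono hlen) (by
      filter_upwards [hpos, hhalf] with l hl h2
      exact energy_diff_bound (A l) a (2 * l) ha (haA l hl) h2 (hint l hl))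
  have hend : 4 * a / (1 / 4 - a ^ 2) = 8 * (2 * a) / (1 - (2 * a) ^ 2) := by
    have e1 : 1 / 4 - a ^ 2 ≠ 0 := by nlinarith
    have e2 : 1 - (2 * a) ^ 2 ≠ 0 := by nlinarith
    rw [div_eq_div_iff e1 e2]; ring
  rw [← hend]
  refine hmain.congr' ?_
  filter_upwards [hpos, hhalf] with l hl h2
  have hinf : ∀ x, ubarStanding ((1 + 2 * a) / 2) x = 1 / 2 + a * Real.tanh (a * x) := fun x => by
    rw [ubarStanding, show (1 + 2 * a) / 2 - 1 / 2 = a by ring]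
  have hup : (1 + 2 * a) / 2 = 1 / 2 + a := by ring
  simp only [hinf]
  simp only [ubl, hup]
  change _ = Real.exp (2 * a * l) * ((∫ x in Ioo (-l) l,
    (gg (1 / 2 + A l * Real.tanh (A l * x)) (phiOf (1 / 2 + A l * Real.tanh (A l * x)))
        (deriv (fun y => phiOf (1 / 2 + A l * Real.tanh (A l * y))) x)
      - gg (1 / 2 + a) (phiOf (1 / 2 + a)) 0)) - _)
  rw [integral_gg_profile (A l) a (ha.trans (haA l hl)) h2 ha ha2 _ measurableSet_Ioo,
    image_profile_Ioo (A l) a l ha (haA l hl) (hlen l hl)]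
  have hG := integral_gg_profile a a ha ha2 ha ha2 univ MeasurableSet.univ
  rw [image_profile_univ a ha, setIntegral_univ] at hG
  rw [hG]
  congr 2
  ring

end
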